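/- Let ν > 0 and ε > 0. Then there exists k₀ ∈ ℕ such that for every integer k ≥ k₀, every φ ∈ (0, π/2] satisfying cos φ − (π/2 − φ)·sin φ > 0 and sin φ / (cos φ − (π/2 − φ)·sin φ) = ν/(kπ), and every real number j which is the k-th positive zero of J_ν, one has j < ν/sin φ − (1 − ε)·π/4. -/

import Mathlib

open Real Set

/-- The Bessel function of the first kind of order `ν`. -/
noncomputable def besselJ (ν x : ℝ) : ℝ :=
  ∑' m : ℕ, (-1 : ℝ) ^ m / (m.factorial * Real.Gamma (m + ν + 1)) * (x / 2) ^ (2 * (m : ℝ) + ν)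

/-- `j` is the `k`-th positive zero of the Bessel function `J_ν`. -/
def IsKthBesselZero (ν : ℝ) (k : ℕ) (j : ℝ) : Prop :=
  0 < j ∧ besselJ ν j = 0 ∧
    {t : ℝ | t ∈ Set.Ioo 0 j ∧ besselJ ν t = 0}.encard = (k - 1 : ℕ)

/-! Poisson's integral represents `J_ν` for `ν > 1 / 2` as a Fourier integral over `[-1, 1]`.
Shifting its contour to the half-lines `±1 + iℝ₊`, on which the exponential decays, gives
`√x J_ν(x) = √(2 / π) cos (x - ν π / 2 - π / 4) + o(1)`, and the three-term recurrence carries this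
to every real order.

The asymptotics locate zeros of `J_ν` up to a multiple of `π`. To index them, Sturm comparison with
`sin` yields one zero in every interval of length `π` when `|ν| ≤ 1 / 2`, and Rolle's theorem
interlaces zeros of `J_{ν+1}` with those of `J_ν`. So each `J_ν` with `ν > -1 / 2` has increasing
positive zeros `z_1, z_2, …` with `z_k = k π + (ν - 1 / 2) π / 2 + o(1)`, and `j_{ν,k} ≤ z_k`
whether or not the sequence is exhaustive. Since `ν / sin φ ≥ k π + ν π / 2 - O(1 / k)`, the gap
`ν / sin φ - j_{ν,k}` is at least `π / 4 - o(1)`.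
-/

open Filter MeasureTheory Topology
open scoped ComplexConjugate

section SturmComparison

variable {u u' q : ℝ → ℝ} {a ω : ℝ}

/-- The Wronskian of `u` and `sin (ω * (x - a))` is antitone, and equals `-ω * u a` at the left end
and `ω * u (a + π / ω)` at the right end. -/
lemma add_nonpos_of_hasDerivAt_of_sq_le (hω : 0 < ω)
    (hu : ∀ x ∈ Icc a (a + π / ω), HasDerivAt u (u' x) x)
    (hu' : ∀ x ∈ Icc a (a + π / ω), HasDerivAt u' (-(q x * u x)) x)
    (hq : ∀ x ∈ Icc a (a + π / ω), ω ^ 2 ≤ q x)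
    (hnonneg : ∀ x ∈ Icc a (a + π / ω), 0 ≤ u x) :
    u a + u (a + π / ω) ≤ 0 := by
  let W (x : ℝ) : ℝ := u' x * sin (ω * (x - a)) - ω * u x * cos (ω * (x - a))
  have hW : ∀ x ∈ Icc a (a + π / ω),
      HasDerivAt W ((ω ^ 2 - q x) * u x * sin (ω * (x - a))) x := by
    intro x hx
    have hphase : HasDerivAt (fun y => ω * (y - a)) ω x := by
      simpa using ((hasDerivAt_id x).sub_const a).const_mul ω
    exact (((hu' x hx).mul hphase.sin).sub (((hu x hx).const_mul ω).mul hphase.cos)).congr_deriv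
      (by ring)
  have hanti : AntitoneOn W (Icc a (a + π / ω)) := by
    refine antitoneOn_of_hasDerivWithinAt_nonpos (convex_Icc _ _)
      (fun x hx => (hW x hx).continuousAt.continuousWithinAt)
      (fun x hx => (hW x (interior_subset hx)).hasDerivWithinAt) fun x hx => ?_
    have hx := interior_subset hx
    have hsin : 0 ≤ sin (ω * (x - a)) := by
      refine sin_nonneg_of_nonneg_of_le_pi (mul_nonneg hω.le (sub_nonneg.2 hx.1)) ?_
      rw [mul_comm, ← le_div_iff₀ hω]
      exact sub_le_iff_le_add'.2 hx.2
    exact mul_nonpos_of_nonpos_of_nonneg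
      (mul_nonpos_of_nonpos_of_nonneg (sub_nonpos.2 (hq x hx)) (hnonneg x hx)) hsin
  have hab : a ≤ a + π / ω := le_add_of_nonneg_right (by positivity)
  have hends : ω * u (a + π / ω) ≤ -(ω * u a) := by
    simpa [W, mul_div_cancel₀ _ hω.ne'] using
      hanti (left_mem_Icc.2 hab) (right_mem_Icc.2 hab) hab
  refine nonpos_of_mul_nonpos_right (b := u a + u (a + π / ω)) ?_ hω
  linarith

lemma exists_eq_zero_mem_Ioc_of_sq_le (hω : 0 < ω)
    (hu : ∀ x ∈ Icc a (a + π / ω), HasDerivAt u (u' x) x)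
    (hu' : ∀ x ∈ Icc a (a + π / ω), HasDerivAt u' (-(q x * u x)) x)
    (hq : ∀ x ∈ Icc a (a + π / ω), ω ^ 2 ≤ q x) :
    ∃ z ∈ Ioc a (a + π / ω), u z = 0 := by
  by_contra! hne
  have hab : a < a + π / ω := lt_add_of_pos_right a (by positivity)
  wlog hpos : 0 < u (a + π / ω) generalizing u u'
  · refine this (u := -u) (u' := -u') (fun x hx => (hu x hx).neg)
      (fun x hx => (hu' x hx).neg.congr_deriv (by simp)) (fun x hx => by simpa using hne x hx) ?_
    exact neg_pos.2 (lt_of_le_of_ne (not_lt.1 hpos) (hne _ (right_mem_Ioc.2 hab)))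
  have hnonneg : ∀ x ∈ Icc a (a + π / ω), 0 ≤ u x := by
    intro x hx
    by_contra! hneg
    obtain ⟨z, hz, hz0⟩ := intermediate_value_Ioo hx.2
      (fun y hy => (hu y ⟨hx.1.trans hy.1, hy.2⟩).continuousAt.continuousWithinAt) ⟨hneg, hpos⟩
    exact hne z ⟨hx.1.trans_lt hz.1, hz.2.le⟩ hz0
  have hleft : 0 ≤ u a := hnonneg a (left_mem_Icc.2 hab.le)
  linarith [add_nonpos_of_hasDerivAt_of_sq_le hω hu hu' hq hnonneg]

end SturmComparison

section BesselClifford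

open scoped Nat

/-- The Bessel–Clifford function `C_ν(z) = ∑ zᵐ / (m! Γ(m + ν + 1))`, through which
`J_ν(x) = (x / 2) ^ ν * C_ν(-x² / 4)`. The library's values `Γ = 0` at the poles and `1 / 0 = 0`
agree with the usual convention `1 / Γ = 0` there, so every real order is allowed. -/
noncomputable def besselClifford (ν z : ℝ) : ℝ :=
  ∑' m : ℕ, z ^ m / (m ! * Gamma (m + ν + 1))

lemma one_div_Gamma_eq_mul_one_div_Gamma_add_one (s : ℝ) :
    1 / Gamma s = s * (1 / Gamma (s + 1)) := by
  rcases eq_or_ne s 0 with rfl | hs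
  · simp
  · rw [Gamma_add_one hs]
    field_simp

lemma summable_besselClifford (ν z : ℝ) :
    Summable fun m : ℕ => z ^ m / (m ! * Gamma (m + ν + 1)) := by
  have ratio_tendsto : Tendsto (fun m : ℕ => |z| / ((m : ℝ) + ν + 1)) atTop (𝓝 0) := by
    simp only [add_assoc]
    exact tendsto_const_nhds.div_atTop
      (tendsto_atTop_add_const_right _ _ tendsto_natCast_atTop_atTop)
  refine summable_of_ratio_norm_eventually_le (r := 1 / 2) (by norm_num) ?_
  filter_upwards [ratio_tendsto.eventually_le_const (show (0 : ℝ) < 1 / 2 by norm_num),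
    tendsto_natCast_atTop_atTop.eventually_gt_atTop (-(ν + 1))] with m hm hpos
  have hpos : 0 < (m : ℝ) + ν + 1 := by linarith
  have hstep : z ^ (m + 1) / ((m + 1) ! * Gamma ((m + 1 : ℕ) + ν + 1)) =
      z / ((m + 1) * (m + ν + 1)) * (z ^ m / (m ! * Gamma (m + ν + 1))) := by
    rw [show ((m + 1 : ℕ) : ℝ) + ν + 1 = (m + ν + 1) + 1 by push_cast; ring,
      Gamma_add_one hpos.ne', Nat.factorial_succ]
    push_cast
    field_simp
    ring
  rw [hstep, norm_mul]
  gcongr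
  calc ‖z / ((m + 1) * (m + ν + 1))‖ = |z| / (m + ν + 1) / (m + 1) := by
        rw [norm_div, norm_eq_abs, norm_of_nonneg (by positivity), div_div, mul_comm]
    _ ≤ |z| / (m + ν + 1) := div_le_self (by positivity) (by simp)
    _ ≤ 1 / 2 := hm

lemma hasDerivAt_besselClifford (ν z : ℝ) :
    HasDerivAt (besselClifford ν) (besselClifford (ν + 1) z) z := by
  let termDeriv (m : ℕ) (w : ℝ) : ℝ := m * w ^ (m - 1) / (m ! * Gamma (m + ν + 1))
  have termDeriv_succ (m : ℕ) (w : ℝ) :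
      termDeriv (m + 1) w = w ^ m / (m ! * Gamma (m + (ν + 1) + 1)) := by
    simp only [termDeriv, Nat.add_sub_cancel, Nat.factorial_succ]
    rw [show ((m + 1 : ℕ) : ℝ) + ν + 1 = m + (ν + 1) + 1 by push_cast; ring]
    push_cast
    field_simp
  have termDeriv_summable (w : ℝ) : Summable (termDeriv · w) :=
    (summable_nat_add_iff 1).1 <| by
      simpa only [termDeriv_succ] using summable_besselClifford (ν + 1) w
  have htsum : ∑' m, termDeriv m z = besselClifford (ν + 1) z := by
    rw [(termDeriv_summable z).tsum_eq_zero_add]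
    simp only [termDeriv_succ]
    simp [termDeriv, besselClifford]
  rw [← htsum]
  refine hasDerivAt_tsum_of_isPreconnected (t := Metric.ball 0 (|z| + 1)) (y₀ := z)
    (termDeriv_summable (|z| + 1)).norm Metric.isOpen_ball (convex_ball _ _).isPreconnected
    (fun m w _ => (hasDerivAt_pow m w).div_const _) (fun m w hw => ?_) (by simp)
    (summable_besselClifford ν z) (by simp)
  have hw : |w| ≤ |(|z| + 1)| := by
    rw [abs_of_pos (by positivity : 0 < |z| + 1)]
    exact (mem_ball_zero_iff.1 hw).le
  simp only [termDeriv, norm_div, norm_mul, norm_pow, norm_eq_abs]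
  gcongr

lemma besselClifford_eq_add (ν z : ℝ) :
    besselClifford ν z = (ν + 1) * besselClifford (ν + 1) z + z * besselClifford (ν + 2) z := by
  have hsum₁ := (summable_besselClifford (ν + 1) z).mul_left (ν + 1)
  have hsum₂ := (summable_besselClifford (ν + 2) z).mul_left z
  rw [besselClifford, besselClifford, besselClifford, ← tsum_mul_left, ← tsum_mul_left,
    (summable_besselClifford ν z).tsum_eq_zero_add, hsum₁.tsum_eq_zero_add, add_assoc ((ν + 1) * _),
    ← ((summable_nat_add_iff 1).2 hsum₁).tsum_add hsum₂]
  congr 1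
  · simpa using one_div_Gamma_eq_mul_one_div_Gamma_add_one (ν + 1)
  · refine tsum_congr fun m => ?_
    have hGamma := one_div_Gamma_eq_mul_one_div_Gamma_add_one (m + ν + 2)
    rw [show ((m + 1 : ℕ) : ℝ) + ν + 1 = m + ν + 2 by push_cast; ring,
      show ((m + 1 : ℕ) : ℝ) + (ν + 1) + 1 = m + ν + 2 + 1 by push_cast; ring,
      show (m : ℝ) + (ν + 2) + 1 = m + ν + 2 + 1 by ring, Nat.factorial_succ,
      div_mul_eq_div_mul_one_div, hGamma]
    push_cast
    field_simp
    ring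

end BesselClifford

section Recurrences

variable {ν x : ℝ}

lemma besselJ_eq_rpow_mul_besselClifford (hx : 0 < x) :
    besselJ ν x = (x / 2) ^ ν * besselClifford ν (-(x / 2) ^ 2) := by
  rw [besselJ, besselClifford, ← tsum_mul_left]
  refine tsum_congr fun m => ?_
  rw [rpow_add (by positivity), rpow_mul (by positivity), rpow_natCast, rpow_two,
    neg_pow ((x / 2) ^ 2) m]
  ring

lemma besselJ_add_two (hx : 0 < x) :
    besselJ (ν + 2) x = 2 * (ν + 1) / x * besselJ (ν + 1) x - besselJ ν x := by
  have hx2 : 0 < x / 2 := by positivity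
  simp only [besselJ_eq_rpow_mul_besselClifford hx, besselClifford_eq_add ν, rpow_add hx2, rpow_one,
    rpow_two]
  field_simp
  ring

lemma hasDerivAt_besselJ (hx : 0 < x) :
    HasDerivAt (besselJ ν) (ν / x * besselJ ν x - besselJ (ν + 1) x) x := by
  have hx2 : 0 < x / 2 := by positivity
  have hhalf : HasDerivAt (fun y : ℝ => y / 2) (1 / 2) x := (hasDerivAt_id x).div_const 2
  have hclifford := (hasDerivAt_besselClifford ν (-(x / 2) ^ 2)).comp x (hhalf.pow 2).neg
  have hprod := (hhalf.rpow_const (p := ν) (.inl hx2.ne')).mul hclifford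
  refine (hprod.congr_deriv ?_).congr_of_eventuallyEq
    ((eventually_gt_nhds hx).mono fun y hy => besselJ_eq_rpow_mul_besselClifford hy)
  simp only [besselJ_eq_rpow_mul_besselClifford hx, rpow_add hx2, rpow_sub hx2, rpow_one]
  simp only [Function.comp_apply, Pi.neg_apply, Pi.pow_apply, Nat.cast_ofNat, Nat.add_one_sub_one,
    pow_one, mul_neg]
  field_simp
  ring

/-- Rolle's theorem for `x ^ (-ν) * J_ν x`, whose derivative is `-x ^ (-ν) * J_{ν+1} x`. -/
lemma exists_besselJ_add_one_eq_zero_mem_Ioo {a b : ℝ} (ha : 0 < a) (hab : a < b)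
    (hJa : besselJ ν a = 0) (hJb : besselJ ν b = 0) :
    ∃ c ∈ Ioo a b, besselJ (ν + 1) c = 0 := by
  have hderiv : ∀ x, 0 < x → HasDerivAt (fun y => y ^ (-ν) * besselJ ν y)
      (-(x ^ (-ν) * besselJ (ν + 1) x)) x := fun x hx =>
    ((hasDerivAt_rpow_const (.inl hx.ne')).mul (hasDerivAt_besselJ hx)).congr_deriv (by
      rw [rpow_sub_one hx.ne']; ring)
  obtain ⟨c, hc, hzero⟩ := exists_hasDerivAt_eq_zero hab
    (fun x hx => (hderiv x (ha.trans_le hx.1)).continuousAt.continuousWithinAt)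
    (by simp [hJa, hJb]) (fun x hx => hderiv x (ha.trans hx.1))
  have hpow : c ^ (-ν) ≠ 0 := (rpow_pos_of_pos (ha.trans hc.1) _).ne'
  exact ⟨c, hc, by simpa [hpow] using hzero⟩

end Recurrences

section PoissonIntegral

open scoped Nat

variable {β : ℝ}

lemma continuous_one_sub_sq_rpow (hβ : 0 ≤ β) : Continuous fun t : ℝ => (1 - t ^ 2) ^ β :=
  Continuous.rpow_const (by fun_prop) fun _ => .inr hβ

lemma integral_rpow_mul_one_sub_rpow {a b : ℝ} (ha : 0 < a) (hb : 0 < b) :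
    ∫ u in (0 : ℝ)..1, u ^ (a - 1) * (1 - u) ^ (b - 1) = Gamma a * Gamma b / Gamma (a + b) := by
  apply Complex.ofReal_injective
  rw [← intervalIntegral.integral_ofReal]
  push_cast [← Complex.Gamma_ofReal]
  rw [← Complex.betaIntegral_eq_Gamma_mul_div _ _ (by simpa) (by simpa), Complex.betaIntegral]
  refine intervalIntegral.integral_congr fun u hu => ?_
  rw [uIcc_of_le zero_le_one] at hu
  rw [Complex.ofReal_cpow hu.1, Complex.ofReal_cpow (sub_nonneg.2 hu.2)]
  push_cast
  rfl

/-- Substitute `t = 2u - 1` in Euler's beta integral and apply the duplication formula. -/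
lemma integral_one_sub_sq_rpow (hβ : 0 ≤ β) :
    ∫ t in (-1 : ℝ)..1, (1 - t ^ 2) ^ β = √π * Gamma (β + 1) / Gamma (β + 3 / 2) := by
  have hbeta : ∫ u in (0 : ℝ)..1, u ^ β * (1 - u) ^ β =
      Gamma (β + 1) ^ 2 / Gamma (2 * (β + 1)) := by
    simpa [sq, two_mul] using
      integral_rpow_mul_one_sub_rpow (a := β + 1) (b := β + 1) (by positivity) (by positivity)
  have hsubst : ∫ t in (-1 : ℝ)..1, (1 - t ^ 2) ^ β =
      2 * 4 ^ β * ∫ u in (0 : ℝ)..1, u ^ β * (1 - u) ^ β := by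
    have h := intervalIntegral.mul_integral_comp_mul_sub (a := 0) (b := 1)
      (f := fun t : ℝ => (1 - t ^ 2) ^ β) 2 1
    norm_num at h
    rw [← h, ← intervalIntegral.integral_const_mul, ← intervalIntegral.integral_const_mul]
    refine intervalIntegral.integral_congr fun u hu => ?_
    rw [uIcc_of_le zero_le_one] at hu
    have hu' : 0 ≤ 1 - u := sub_nonneg.2 hu.2
    simp only [mul_assoc, ← mul_rpow hu.1 hu', ← mul_rpow zero_le_four (mul_nonneg hu.1 hu')]
    ring_nf
  have hdup := Gamma_mul_Gamma_add_half (β + 1)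
  have hpow : (2 : ℝ) ^ (1 - 2 * (β + 1)) * (2 * 4 ^ β) = 1 := by
    rw [show (4 : ℝ) = 2 ^ (2 : ℝ) by norm_num, ← rpow_mul zero_le_two,
      ← rpow_one_add' zero_le_two (by positivity), ← rpow_add two_pos]
    ring_nf
    exact rpow_zero 2
  have : 0 < Gamma (β + 1) := Gamma_pos_of_pos (by positivity)
  have : 0 < Gamma (β + 3 / 2) := Gamma_pos_of_pos (by positivity)
  have : 0 < Gamma (2 * (β + 1)) := Gamma_pos_of_pos (by positivity)
  rw [add_assoc, show (1 : ℝ) + 1 / 2 = 3 / 2 by norm_num] at hdup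
  rw [hsubst, hbeta, eq_div_iff (by positivity)]
  calc _ = 2 * 4 ^ β * Gamma (β + 1) / Gamma (2 * (β + 1)) *
        (Gamma (β + 1) * Gamma (β + 3 / 2)) := by ring
    _ = 2 ^ (1 - 2 * (β + 1)) * (2 * 4 ^ β) * (√π * Gamma (β + 1)) := by rw [hdup]; field_simp
    _ = √π * Gamma (β + 1) := by rw [hpow, one_mul]

lemma integral_one_sub_sq_rpow_mul_pow_succ (hβ : 0 ≤ β) (m : ℕ) :
    (2 * m + 2 * β + 3) * ∫ t in (-1 : ℝ)..1, (1 - t ^ 2) ^ β * t ^ (2 * (m + 1)) =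
      (2 * m + 1) * ∫ t in (-1 : ℝ)..1, (1 - t ^ 2) ^ β * t ^ (2 * m) := by
  have hint (n : ℕ) : IntervalIntegrable (fun t : ℝ => (1 - t ^ 2) ^ β * t ^ n) volume (-1) 1 :=
    ((continuous_one_sub_sq_rpow hβ).mul (continuous_pow n)).intervalIntegrable _ _
  have hderiv (t : ℝ) (ht : t ∈ uIcc (-1) 1) :
      HasDerivAt (fun t : ℝ => (1 - t ^ 2) ^ (β + 1) * t ^ (2 * m + 1))
        ((2 * m + 1) * ((1 - t ^ 2) ^ β * t ^ (2 * m)) -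
          (2 * m + 2 * β + 3) * ((1 - t ^ 2) ^ β * t ^ (2 * (m + 1)))) t := by
    rw [uIcc_of_le (by norm_num)] at ht
    have hbase : HasDerivAt (fun t : ℝ => 1 - t ^ 2) (-(2 * t)) t := by
      simpa using (hasDerivAt_pow 2 t).const_sub 1
    refine ((hbase.rpow_const (.inr (by linarith))).mul
      (hasDerivAt_pow (2 * m + 1) t)).congr_deriv ?_
    rw [rpow_add_one' (by nlinarith [ht.1, ht.2]) (by positivity)]
    simp only [add_sub_cancel_right, Nat.add_sub_cancel]
    push_cast
    ring
  have hftc := intervalIntegral.integral_eq_sub_of_hasDerivAt hderiv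
    (((hint _).const_mul _).sub ((hint _).const_mul _))
  rw [intervalIntegral.integral_sub ((hint _).const_mul _) ((hint _).const_mul _),
    intervalIntegral.integral_const_mul, intervalIntegral.integral_const_mul] at hftc
  have hzero : (0 : ℝ) ^ (β + 1) = 0 := zero_rpow (by positivity)
  norm_num [hzero] at hftc
  linarith

lemma integral_one_sub_sq_rpow_mul_pow (hβ : 0 ≤ β) (m : ℕ) :
    ∫ t in (-1 : ℝ)..1, (1 - t ^ 2) ^ β * t ^ (2 * m) =
      √π * Gamma (β + 1) * ((2 * m)! / (4 ^ m * m ! * Gamma (m + (β + 1 / 2) + 1))) := by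
  induction m with
  | zero =>
    have := integral_one_sub_sq_rpow hβ
    simp only [mul_zero, pow_zero, mul_one, Nat.factorial_zero, Nat.cast_one, CharP.cast_eq_zero,
      one_div, zero_add, one_mul]
    rw [this]
    ring_nf
  | succ m ih =>
    have hrec := integral_one_sub_sq_rpow_mul_pow_succ hβ m
    have hpos : 0 < m + (β + 1 / 2) + 1 := by positivity
    have hGamma : Gamma (m + (β + 1 / 2) + 1) ≠ 0 := (Gamma_pos_of_pos hpos).ne'
    rw [ih, mul_comm, ← eq_div_iff (by positivity)] at hrec
    rw [hrec, show ((m + 1 : ℕ) : ℝ) + (β + 1 / 2) + 1 = m + (β + 1 / 2) + 1 + 1 by push_cast; ring,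
      Gamma_add_one hpos.ne', Nat.mul_succ, Nat.factorial_succ, Nat.factorial_succ,
      Nat.factorial_succ, pow_succ]
    push_cast
    field_simp
    ring

lemma hasSum_integral_one_sub_sq_rpow_mul_cos (hβ : 0 ≤ β) (x : ℝ) :
    HasSum (fun m : ℕ => (-1) ^ m * x ^ (2 * m) / (2 * m)! *
        ∫ t in (-1 : ℝ)..1, (1 - t ^ 2) ^ β * t ^ (2 * m))
      (∫ t in (-1 : ℝ)..1, (1 - t ^ 2) ^ β * cos (x * t)) := by
  have := continuous_one_sub_sq_rpow hβ
  simp only [← intervalIntegral.integral_const_mul]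
  refine intervalIntegral.hasSum_integral_of_dominated_convergence
    (fun m _ => |x| ^ (2 * m) / (2 * m)!)
    (fun m => (by fun_prop : Continuous _).aestronglyMeasurable)
    (fun m => .of_forall fun t ht => ?_)
    (.of_forall fun _ _ => (summable_pow_div_factorial |x|).comp_injective
      (mul_right_injective₀ two_ne_zero))
    (by simp) (.of_forall fun t _ => ?_)
  · rw [uIoc_of_le (by norm_num)] at ht
    have hweight_nonneg : 0 ≤ 1 - t ^ 2 := by nlinarith [ht.1, ht.2]
    have hweight : ‖(1 - t ^ 2) ^ β‖ ≤ 1 := by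
      rw [norm_of_nonneg (rpow_nonneg hweight_nonneg _)]
      exact rpow_le_one hweight_nonneg (by nlinarith) hβ
    have hpow : ‖t ^ (2 * m)‖ ≤ 1 := by
      rw [norm_pow]
      exact pow_le_one₀ (norm_nonneg t) (abs_le.2 ⟨ht.1.le, ht.2⟩)
    rw [norm_mul, norm_mul]
    calc _ ≤ ‖(-1) ^ m * x ^ (2 * m) / (2 * m)!‖ * (1 * 1) := by gcongr
      _ = |x| ^ (2 * m) / (2 * m)! := by simp
  · refine ((hasSum_cos (x * t)).mul_left ((1 - t ^ 2) ^ β)).congr_fun fun m => ?_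
    rw [mul_pow]
    ring

lemma besselJ_eq_integral_cos {ν x : ℝ} (hν : 1 / 2 ≤ ν) (hx : 0 < x) :
    besselJ ν x = (x / 2) ^ ν / (√π * Gamma (ν + 1 / 2)) *
      ∫ t in (-1 : ℝ)..1, (1 - t ^ 2) ^ (ν - 1 / 2) * cos (x * t) := by
  have hβ : 0 ≤ ν - 1 / 2 := sub_nonneg.2 hν
  have : 0 < Gamma (ν + 1 / 2) := Gamma_pos_of_pos (by linarith)
  rw [← (hasSum_integral_one_sub_sq_rpow_mul_cos hβ x).tsum_eq, besselJ, ← tsum_mul_left]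
  refine tsum_congr fun m => ?_
  have : 0 < Gamma (m + ν + 1) := Gamma_pos_of_pos (by positivity)
  rw [integral_one_sub_sq_rpow_mul_pow hβ, sub_add_cancel, show ν - 1 / 2 + 1 = ν + 1 / 2 by ring,
    rpow_add (by positivity), mul_comm 2 (m : ℝ), rpow_mul (by positivity), rpow_natCast, rpow_two]
  field_simp
  rw [pow_mul x, pow_right_comm, ← mul_pow]
  congr 1
  ring

end PoissonIntegral

section HalfStrip

variable {E : Type*} [NormedAddCommGroup E] [NormedSpace ℂ E]

lemma integral_eq_sub_integral_Ioi_of_halfStrip {f : ℂ → E} {a b : ℝ} (hab : a ≤ b)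
    (hcont : ContinuousOn f (Icc a b ×ℂ Ici 0))
    (hdiff : DifferentiableOn ℂ f (Ioo a b ×ℂ Ioi 0))
    (htop : Tendsto (fun R : ℝ => ∫ t in a..b, f (t + R * Complex.I)) atTop (𝓝 0))
    (hleft : IntegrableOn (fun s : ℝ => f (a + s * Complex.I)) (Ioi 0))
    (hright : IntegrableOn (fun s : ℝ => f (b + s * Complex.I)) (Ioi 0)) :
    ∫ t in a..b, f t = Complex.I • (∫ s in Ioi (0 : ℝ), f (a + s * Complex.I)) -
      Complex.I • ∫ s in Ioi (0 : ℝ), f (b + s * Complex.I) := by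
  have hrect (R : ℝ) (hR : 0 ≤ R) : (∫ t in a..b, f (t + R * Complex.I)) -
      Complex.I • (∫ s in (0 : ℝ)..R, f (b + s * Complex.I)) +
        Complex.I • (∫ s in (0 : ℝ)..R, f (a + s * Complex.I)) = ∫ t in a..b, f t := by
    have h := Complex.integral_boundary_rect_eq_zero_of_continuousOn_of_differentiableOn f
      a (b + R * Complex.I)
      (hcont.mono <| by
        simpa [uIcc_of_le hab, uIcc_of_le hR] using
          Complex.reProdIm_subset_iff'.2 (.inl ⟨subset_rfl, Icc_subset_Ici_self⟩))
      (hdiff.mono <| by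
        simpa [hab, hR] using
          Complex.reProdIm_subset_iff'.2 (.inl ⟨subset_rfl, Ioo_subset_Ioi_self⟩))
    simp only [Complex.ofReal_re, Complex.ofReal_im, Complex.add_re, Complex.mul_re, Complex.I_re,
      Complex.add_im, Complex.mul_im, Complex.I_im, mul_zero, mul_one, sub_self, add_zero, zero_add,
      Complex.ofReal_zero, zero_mul] at h
    rw [eq_comm, ← sub_eq_zero, ← h]
    abel
  have hright_lim := intervalIntegral_tendsto_integral_Ioi 0 hright tendsto_id
  have hleft_lim := intervalIntegral_tendsto_integral_Ioi 0 hleft tendsto_id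
  have hlimit := (htop.sub (hright_lim.const_smul Complex.I)).add (hleft_lim.const_smul Complex.I)
  rw [tendsto_nhds_unique tendsto_const_nhds
    (hlimit.congr' ((eventually_ge_atTop 0).mono fun R hR => hrect R hR))]
  abel

end HalfStrip

section HankelKernel

variable {β : ℝ}

/-- Hankel's kernel `u ^ β * e ^ (-u) * (2 + i y u) ^ β`. On the vertical line `1 + iℝ₊`, rescaled
by `u = x s`, the integrand of Poisson's integral is this kernel with `y = 1 / x`, up to a factor
independent of `s`. -/
noncomputable def hankelKernel (β y u : ℝ) : ℂ :=
  (u ^ β * exp (-u) : ℝ) * (2 + (y * u : ℝ) * Complex.I) ^ (β : ℂ)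

lemma add_rpow_le_two_mul_rpow_add {a b : ℝ} (ha : 0 ≤ a) (hb : 0 ≤ b) (hβ : 0 ≤ β) :
    (a + b) ^ β ≤ (2 * a) ^ β + (2 * b) ^ β := by
  rcases le_total a b with h | h
  · exact le_add_of_nonneg_of_le (by positivity) (by gcongr; linarith)
  · exact le_add_of_le_of_nonneg (by gcongr; linarith) (by positivity)

lemma continuous_two_add_ofReal_mul_I_cpow (hβ : 0 < β) :
    Continuous fun v : ℝ => (2 + v * Complex.I) ^ (β : ℂ) :=
  continuous_iff_continuousAt.2 fun v =>
    (Complex.continuousAt_cpow_const_of_re_pos (z := 2 + v * Complex.I) (.inl (by simp))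
      (by simpa using hβ)).comp (f := fun v : ℝ => 2 + v * Complex.I) (by fun_prop)

lemma continuous_hankelKernel (hβ : 0 < β) (y : ℝ) : Continuous (hankelKernel β y) := by
  have hrpow : Continuous fun u : ℝ => u ^ β := continuous_rpow_const hβ.le
  exact (Complex.continuous_ofReal.comp (by fun_prop)).mul
    ((continuous_two_add_ofReal_mul_I_cpow hβ).comp (continuous_const_mul y))

lemma norm_hankelKernel_le {y c u : ℝ} (hβ : 0 ≤ β) (hyc : |y| ≤ c) (hu : 0 ≤ u) :
    ‖hankelKernel β y u‖ ≤ u ^ β * exp (-u) * (2 + c * u) ^ β := by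
  rw [hankelKernel, norm_mul, Complex.norm_real, norm_of_nonneg (by positivity),
    Complex.norm_cpow_real]
  gcongr
  calc ‖2 + ((y * u : ℝ) : ℂ) * Complex.I‖ ≤ ‖(2 : ℂ)‖ + ‖((y * u : ℝ) : ℂ) * Complex.I‖ :=
        norm_add_le _ _
    _ = 2 + |y| * u := by simp [abs_of_nonneg hu]
    _ ≤ 2 + c * u := by gcongr

lemma integrableOn_rpow_mul_exp_neg_mul_two_add_rpow {c : ℝ} (hβ : 0 ≤ β) (hc : 0 ≤ c) :
    IntegrableOn (fun u => u ^ β * exp (-u) * (2 + c * u) ^ β) (Ioi 0) := by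
  have hint : IntegrableOn
      (fun u => 4 ^ β * (exp (-u) * u ^ (β + 1 - 1)) +
        (2 * c) ^ β * (exp (-u) * u ^ (2 * β + 1 - 1))) (Ioi 0) :=
    ((GammaIntegral_convergent (by positivity)).const_mul _).add
      ((GammaIntegral_convergent (by positivity)).const_mul _)
  refine hint.mono' (by measurability) ((ae_restrict_iff' measurableSet_Ioi).2
    (.of_forall fun u (hu : 0 < u) => ?_))
  rw [norm_of_nonneg (by positivity), add_sub_cancel_right, add_sub_cancel_right, two_mul β,
    rpow_add hu]
  calc u ^ β * exp (-u) * (2 + c * u) ^ β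
      ≤ u ^ β * exp (-u) * ((2 * 2) ^ β + (2 * (c * u)) ^ β) := by
        gcongr
        exact add_rpow_le_two_mul_rpow_add zero_le_two (by positivity) hβ
    _ = _ := by
        rw [← mul_assoc 2 c u, mul_rpow (by positivity) hu.le]
        norm_num
        ring

lemma integrableOn_hankelKernel (hβ : 0 < β) (y : ℝ) : IntegrableOn (hankelKernel β y) (Ioi 0) :=
  (integrableOn_rpow_mul_exp_neg_mul_two_add_rpow hβ.le (abs_nonneg y)).mono'
    (continuous_hankelKernel hβ y).aestronglyMeasurable ((ae_restrict_iff' measurableSet_Ioi).2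
      (.of_forall fun _ hu => norm_hankelKernel_le hβ.le le_rfl (mem_Ioi.1 hu).le))

lemma integral_hankelKernel_zero (hβ : 0 < β) :
    ∫ u in Ioi 0, hankelKernel β 0 u = (2 ^ β * Gamma (β + 1) : ℝ) := by
  simp only [hankelKernel, zero_mul, Complex.ofReal_zero, add_zero]
  rw [integral_mul_const, integral_complex_ofReal, Gamma_eq_integral (by positivity),
    mul_comm, Complex.ofReal_mul, Complex.ofReal_cpow zero_le_two]
  simp only [add_sub_cancel_right, mul_comm, Complex.ofReal_ofNat]

lemma tendsto_integral_hankelKernel (hβ : 0 < β) :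
    Tendsto (fun y => ∫ u in Ioi 0, hankelKernel β y u) (𝓝 0)
      (𝓝 (2 ^ β * Gamma (β + 1) : ℝ)) := by
  rw [← integral_hankelKernel_zero hβ]
  refine tendsto_integral_filter_of_dominated_convergence _
    (.of_forall fun y => (continuous_hankelKernel hβ y).aestronglyMeasurable) ?_
    (integrableOn_rpow_mul_exp_neg_mul_two_add_rpow hβ.le zero_le_one)
    (.of_forall fun u => ?_)
  · filter_upwards [Metric.closedBall_mem_nhds (0 : ℝ) one_pos] with y hy
    exact (ae_restrict_iff' measurableSet_Ioi).2 (.of_forall fun u hu =>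
      norm_hankelKernel_le hβ.le (mem_closedBall_zero_iff.1 hy) (mem_Ioi.1 hu).le)
  · exact (((continuous_two_add_ofReal_mul_I_cpow hβ).comp
      (continuous_mul_const u)).const_mul _).tendsto 0

end HankelKernel

section PoissonContour

variable {β x : ℝ}

/-- The analytic continuation of `(1 - t²) ^ β * e ^ (i x t)` from `[-1, 1]` to the strip
`-1 < re z < 1`; splitting `1 - z²` keeps both branch cuts outside the strip. -/
noncomputable def poissonIntegrand (β x : ℝ) (z : ℂ) : ℂ :=
  (1 - z) ^ (β : ℂ) * (1 + z) ^ (β : ℂ) * Complex.exp (x * z * Complex.I)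

lemma re_poissonIntegrand_ofReal {t : ℝ} (ht : t ∈ Icc (-1) 1) :
    (poissonIntegrand β x t).re = (1 - t ^ 2) ^ β * cos (x * t) := by
  have hsub : 0 ≤ 1 - t := by linarith [ht.2]
  have hadd : 0 ≤ 1 + t := by linarith [ht.1]
  have hweight : (1 - t : ℂ) ^ (β : ℂ) * (1 + t : ℂ) ^ (β : ℂ) = ((1 - t ^ 2) ^ β : ℝ) := by
    rw [show 1 - t ^ 2 = (1 - t) * (1 + t) by ring, mul_rpow hsub hadd, Complex.ofReal_mul,
      Complex.ofReal_cpow hsub, Complex.ofReal_cpow hadd]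
    push_cast
    rfl
  rw [poissonIntegrand, hweight, Complex.re_ofReal_mul, ← Complex.ofReal_mul,
    Complex.exp_ofReal_mul_I_re]

lemma poissonIntegrand_one_add_mul_I {s : ℝ} (hx : 0 < x) (hs : 0 < s) :
    poissonIntegrand β x (1 + s * Complex.I) =
      Complex.exp ((x - β * π / 2 : ℝ) * Complex.I) * (x ^ (-β) : ℝ) *
        hankelKernel β x⁻¹ (x * s) := by
  have hpow : (1 - (1 + s * Complex.I)) ^ (β : ℂ) =
      (s ^ β : ℝ) * Complex.exp ((-(β * π / 2) : ℝ) * Complex.I) := by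
    rw [show 1 - (1 + s * Complex.I) = s * -Complex.I by ring,
      Complex.cpow_def_of_ne_zero (by simp [hs.ne']), Complex.log_ofReal_mul hs (by simp),
      Complex.log_neg_I, rpow_def_of_pos hs, Complex.ofReal_exp, ← Complex.exp_add]
    congr 1
    push_cast
    ring
  have hexp : Complex.exp (x * (1 + s * Complex.I) * Complex.I) =
      Complex.exp (x * Complex.I) * (exp (-(x * s)) : ℝ) := by
    rw [Complex.ofReal_exp, ← Complex.exp_add]
    congr 1
    push_cast
    linear_combination x * s * Complex.I_sq
  have hscale : x ^ (-β) * (x * s) ^ β = s ^ β := by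
    rw [mul_rpow hx.le hs.le, rpow_neg hx.le, inv_mul_cancel_left₀ (rpow_pos_of_pos hx β).ne']
  rw [poissonIntegrand, hankelKernel, hpow, hexp, inv_mul_cancel_left₀ hx.ne', ← hscale,
    sub_eq_add_neg, Complex.ofReal_add, add_mul, Complex.exp_add]
  push_cast
  ring_nf

lemma poissonIntegrand_neg_one_add_mul_I {s : ℝ} (hs : 0 < s) :
    poissonIntegrand β x (-1 + s * Complex.I) =
      conj (poissonIntegrand β x (1 + s * Complex.I)) := by
  have harg {z : ℂ} (hz : z.im ≠ 0) : z.arg ≠ π := fun h => hz (Complex.arg_eq_pi_iff.1 h).2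
  have hsub : (1 : ℂ) - (-1 + s * Complex.I) = conj (1 + (1 + s * Complex.I)) := by
    simp only [map_add, map_one, map_mul, Complex.conj_ofReal, Complex.conj_I]
    ring
  have hadd : (1 : ℂ) + (-1 + s * Complex.I) = conj (1 - (1 + s * Complex.I)) := by simp
  have hexp : x * (-1 + s * Complex.I) * Complex.I =
      conj (x * (1 + s * Complex.I) * Complex.I) := by
    simp only [map_add, map_one, map_mul, Complex.conj_ofReal, Complex.conj_I]
    ring
  rw [poissonIntegrand, poissonIntegrand, hsub, hadd, hexp,
    Complex.conj_cpow _ _ (harg (by simp [hs.ne'])),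
    Complex.conj_cpow _ _ (harg (by simp [hs.ne'])), Complex.conj_ofReal, Complex.exp_conj, map_mul,
    map_mul, mul_comm (conj _ : ℂ)]

lemma continuousOn_poissonIntegrand (hβ : 0 < β) :
    ContinuousOn (poissonIntegrand β x) (Complex.re ⁻¹' Icc (-1) 1) := by
  intro z hz
  have hsub : ContinuousAt (fun z : ℂ => (1 - z) ^ (β : ℂ)) z :=
    (Complex.continuousAt_cpow_const_of_re_pos (z := 1 - z) (.inl (by simpa using hz.2))
      (by simpa using hβ)).comp (f := fun z : ℂ => 1 - z) (by fun_prop)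
  have hadd : ContinuousAt (fun z : ℂ => (1 + z) ^ (β : ℂ)) z :=
    (Complex.continuousAt_cpow_const_of_re_pos (z := 1 + z)
      (.inl (by simpa using neg_le_iff_add_nonneg'.1 hz.1)) (by simpa using hβ)).comp
      (f := fun z : ℂ => 1 + z) (by fun_prop)
  exact ((hsub.mul hadd).mul (by fun_prop)).continuousWithinAt

lemma differentiableOn_poissonIntegrand :
    DifferentiableOn ℂ (poissonIntegrand β x) (Complex.re ⁻¹' Ioo (-1) 1) := by
  intro z hz
  have hsub : 1 - z ∈ Complex.slitPlane := .inl (by simpa using hz.2)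
  have hadd : 1 + z ∈ Complex.slitPlane := .inl (by simpa using neg_lt_iff_pos_add'.1 hz.1)
  exact ((((differentiableAt_const _).sub differentiableAt_id).cpow (by fun_prop) hsub).mul
    (((differentiableAt_const _).add differentiableAt_id).cpow (by fun_prop) hadd)).mul
      (by fun_prop) |>.differentiableWithinAt

lemma norm_poissonIntegrand_add_mul_I_le {R t : ℝ} (hβ : 0 ≤ β) (hR : 0 ≤ R)
    (ht : t ∈ Icc (-1) 1) :
    ‖poissonIntegrand β x (t + R * Complex.I)‖ ≤ (R + 2) ^ (2 * β) * exp (-(x * R)) := by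
  have hz : ‖(t : ℂ) + R * Complex.I‖ ≤ R + 1 := by
    refine (norm_add_le _ _).trans ?_
    simp only [Complex.norm_real, norm_mul, Complex.norm_I, mul_one, norm_eq_abs, abs_of_nonneg hR]
    linarith [abs_le.2 ht]
  have hsub : ‖1 - ((t : ℂ) + R * Complex.I)‖ ≤ R + 2 :=
    (norm_sub_le _ _).trans (by rw [norm_one]; linarith)
  have hadd : ‖1 + ((t : ℂ) + R * Complex.I)‖ ≤ R + 2 :=
    (norm_add_le _ _).trans (by rw [norm_one]; linarith)
  rw [poissonIntegrand, norm_mul, norm_mul, Complex.norm_cpow_real, Complex.norm_cpow_real,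
    Complex.norm_exp, two_mul β, rpow_add (by positivity)]
  gcongr
  simp

lemma tendsto_integral_poissonIntegrand_add_mul_I (hβ : 0 ≤ β) (hx : 0 < x) :
    Tendsto (fun R : ℝ => ∫ t in (-1 : ℝ)..1, poissonIntegrand β x (t + R * Complex.I))
      atTop (𝓝 0) := by
  have hbound : Tendsto (fun R : ℝ => (R + 2) ^ (2 * β) * exp (-x * (R + 2)) * (2 * exp (2 * x)))
      atTop (𝓝 0) := by
    simpa using ((tendsto_rpow_mul_exp_neg_mul_atTop_nhds_zero (2 * β) x hx).comp
      (tendsto_atTop_add_const_right atTop 2 tendsto_id)).mul_const (2 * exp (2 * x))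
  refine squeeze_zero_norm' ?_ hbound
  filter_upwards [eventually_ge_atTop 0] with R hR
  calc _ ≤ (R + 2) ^ (2 * β) * exp (-(x * R)) * |1 - -1| := by
        refine intervalIntegral.norm_integral_le_of_norm_le_const fun t ht => ?_
        rw [uIoc_of_le (by norm_num)] at ht
        exact norm_poissonIntegrand_add_mul_I_le hβ hR (Ioc_subset_Icc_self ht)
    _ = _ := by
        rw [show -(x * R) = -x * (R + 2) + 2 * x by ring, exp_add]
        norm_num
        ring

lemma integrableOn_poissonIntegrand_one_add_mul_I (hβ : 0 < β) (hx : 0 < x) :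
    IntegrableOn (fun s : ℝ => poissonIntegrand β x (1 + s * Complex.I)) (Ioi 0) := by
  have hkernel : IntegrableOn (fun s => hankelKernel β x⁻¹ (x * s)) (Ioi 0) := by
    simpa using (integrableOn_Ioi_comp_mul_left_iff (hankelKernel β x⁻¹) 0 hx).2
      (by simpa using integrableOn_hankelKernel hβ x⁻¹)
  exact IntegrableOn.congr_fun (hkernel.const_mul _)
    (fun s hs => (poissonIntegrand_one_add_mul_I hx hs).symm) measurableSet_Ioi

lemma integral_poissonIntegrand_one_add_mul_I (hx : 0 < x) :
    ∫ s in Ioi (0 : ℝ), poissonIntegrand β x (1 + s * Complex.I) = (x ^ (-(β + 1)) : ℝ) *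
      (Complex.exp ((x - β * π / 2 : ℝ) * Complex.I) *
        ∫ u in Ioi 0, hankelKernel β x⁻¹ u) := by
  rw [setIntegral_congr_fun measurableSet_Ioi fun s hs => poissonIntegrand_one_add_mul_I hx hs,
    integral_const_mul, integral_comp_mul_left_Ioi _ _ hx, mul_zero, Complex.real_smul,
    neg_add, rpow_add hx, rpow_neg_one]
  push_cast
  ring

lemma integral_poissonIntegrand (hβ : 0 < β) (hx : 0 < x) :
    ∫ t in (-1 : ℝ)..1, poissonIntegrand β x t =
      (2 * (∫ s in Ioi (0 : ℝ), poissonIntegrand β x (1 + s * Complex.I)).im : ℝ) := by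
  have hright := integrableOn_poissonIntegrand_one_add_mul_I hβ hx
  have hconj : EqOn (fun s : ℝ => poissonIntegrand β x (-1 + s * Complex.I))
      (fun s : ℝ => conj (poissonIntegrand β x (1 + s * Complex.I))) (Ioi 0) :=
    fun s hs => poissonIntegrand_neg_one_add_mul_I hs
  have hleft : IntegrableOn (fun s : ℝ => poissonIntegrand β x (-1 + s * Complex.I)) (Ioi 0) :=
    IntegrableOn.congr_fun (Complex.conjLIE.integrable_comp_iff.2 hright) hconj.symm
      measurableSet_Ioi
  have hshift := integral_eq_sub_integral_Ioi_of_halfStrip (f := poissonIntegrand β x)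
    (a := -1) (b := 1) (by norm_num)
    ((continuousOn_poissonIntegrand hβ).mono fun z hz => hz.1)
    (differentiableOn_poissonIntegrand.mono fun z hz => hz.1)
    (tendsto_integral_poissonIntegrand_add_mul_I hβ.le hx)
    (by simpa using hleft) (by simpa using hright)
  simp only [Complex.ofReal_neg, Complex.ofReal_one] at hshift
  rw [hshift, setIntegral_congr_fun measurableSet_Ioi hconj, integral_conj, smul_eq_mul,
    smul_eq_mul, ← mul_sub, ← neg_sub, Complex.sub_conj]
  linear_combination -(2 * (∫ s in Ioi (0 : ℝ), poissonIntegrand β x (1 + s * Complex.I)).im : ℝ) *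
    Complex.I_sq

/-- Poisson's integral, with its contour shifted to the half-lines `±1 + iℝ₊`. -/
lemma integral_one_sub_sq_rpow_mul_cos_eq_im (hβ : 0 < β) (hx : 0 < x) :
    ∫ t in (-1 : ℝ)..1, (1 - t ^ 2) ^ β * cos (x * t) = 2 * x ^ (-(β + 1)) *
      (Complex.exp ((x - β * π / 2 : ℝ) * Complex.I) * ∫ u in Ioi 0, hankelKernel β x⁻¹ u).im := by
  have hint : IntervalIntegrable (fun t : ℝ => poissonIntegrand β x t) volume (-1) 1 := by
    refine ContinuousOn.intervalIntegrable_of_Icc (by norm_num) ?_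
    exact (continuousOn_poissonIntegrand hβ).comp Complex.continuous_ofReal.continuousOn
      fun t ht => ht
  calc _ = ∫ t in (-1 : ℝ)..1, (poissonIntegrand β x t).re := by
        refine intervalIntegral.integral_congr fun t ht => (re_poissonIntegrand_ofReal ?_).symm
        rwa [uIcc_of_le (by norm_num)] at ht
    _ = (∫ t in (-1 : ℝ)..1, poissonIntegrand β x t).re :=
        Complex.reCLM.intervalIntegral_comp_comm hint
    _ = _ := by
        rw [integral_poissonIntegrand hβ hx, integral_poissonIntegrand_one_add_mul_I hx,
          Complex.ofReal_re, Complex.im_ofReal_mul, mul_assoc]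

end PoissonContour

section Asymptotics

variable {ν : ℝ}

lemma sqrt_mul_besselJ_eq_im {x : ℝ} (hν : 1 / 2 < ν) (hx : 0 < x) :
    √x * besselJ ν x = 2 ^ (1 - ν) / (√π * Gamma (ν + 1 / 2)) *
      (Complex.exp ((x - (ν - 1 / 2) * π / 2 : ℝ) * Complex.I) *
        ∫ u in Ioi 0, hankelKernel (ν - 1 / 2) x⁻¹ u).im := by
  have hpow : √x * (x / 2) ^ ν * (2 * x ^ (-(ν - 1 / 2 + 1))) = 2 ^ (1 - ν) := by
    rw [show -(ν - 1 / 2 + 1) = -(1 / 2 + ν) by ring, rpow_neg hx.le, rpow_add hx, ← sqrt_eq_rpow,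
      rpow_sub two_pos, rpow_one, div_rpow hx.le zero_le_two]
    field_simp
  rw [besselJ_eq_integral_cos hν.le hx, integral_one_sub_sq_rpow_mul_cos_eq_im (sub_pos.2 hν) hx,
    ← hpow]
  ring

lemma tendsto_sqrt_mul_besselJ_sub_of_half_lt (hν : 1 / 2 < ν) :
    Tendsto (fun x => √x * besselJ ν x - √(2 / π) * cos (x - ν * π / 2 - π / 4)) atTop (𝓝 0) := by
  set G := Gamma (ν + 1 / 2) with hG
  have hG_pos : 0 < G := Gamma_pos_of_pos (by linarith)
  set d : ℝ := 2 ^ (1 - ν) / (√π * G) with hd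
  set K₀ : ℝ := 2 ^ (ν - 1 / 2) * G with hK₀
  have hdK₀ : d * K₀ = √(2 / π) := by
    have hsqrt : √2 = 2 ^ (1 - ν) * 2 ^ (ν - 1 / 2) := by
      rw [sqrt_eq_rpow, ← rpow_add two_pos]
      ring_nf
    rw [hd, hK₀, sqrt_div zero_le_two, hsqrt]
    field_simp
  have hlimit : Tendsto (fun x : ℝ => ∫ u in Ioi 0, hankelKernel (ν - 1 / 2) x⁻¹ u)
      atTop (𝓝 K₀) := by
    have h := (tendsto_integral_hankelKernel (sub_pos.2 hν)).comp tendsto_inv_atTop_zero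
    rwa [show ν - 1 / 2 + 1 = ν + 1 / 2 by ring] at h
  have hK : Tendsto (fun x => d * ‖(∫ u in Ioi 0, hankelKernel (ν - 1 / 2) x⁻¹ u) - K₀‖)
      atTop (𝓝 0) := by
    simpa only [mul_zero] using (tendsto_iff_norm_sub_tendsto_zero.1 hlimit).const_mul d
  refine squeeze_zero_norm' ?_ hK
  filter_upwards [eventually_gt_atTop 0] with x hx
  set phase := Complex.exp ((x - (ν - 1 / 2) * π / 2 : ℝ) * Complex.I) with hphase
  have hcos : cos (x - ν * π / 2 - π / 4) = phase.im := by
    rw [hphase, Complex.exp_ofReal_mul_I_im, ← cos_pi_div_two_sub, ← cos_neg]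
    ring_nf
  rw [sqrt_mul_besselJ_eq_im hν hx, ← hG, ← hd, ← hphase, hcos, ← hdK₀, mul_assoc, ← mul_sub,
    norm_mul, norm_of_nonneg (by positivity : 0 ≤ d)]
  gcongr
  calc _ = ‖(phase * ((∫ u in Ioi 0, hankelKernel (ν - 1 / 2) x⁻¹ u) - K₀)).im‖ := by
        rw [mul_sub, mul_comm phase K₀, Complex.sub_im, Complex.im_ofReal_mul]
    _ ≤ ‖phase * ((∫ u in Ioi 0, hankelKernel (ν - 1 / 2) x⁻¹ u) - K₀)‖ :=
        Complex.abs_im_le_norm _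
    _ = _ := by rw [norm_mul, Complex.norm_exp_ofReal_mul_I, one_mul]

/-- Downward induction on the order, from the range `1 / 2 < ν` of Poisson's integral, using
`J_ν = 2 (ν + 1) / x * J_{ν+1} - J_{ν+2}`. -/
theorem tendsto_sqrt_mul_besselJ_sub (ν : ℝ) :
    Tendsto (fun x => √x * besselJ ν x - √(2 / π) * cos (x - ν * π / 2 - π / 4)) atTop (𝓝 0) := by
  obtain ⟨n, hn⟩ := exists_nat_gt (1 / 2 - ν)
  induction n generalizing ν with
  | zero => exact tendsto_sqrt_mul_besselJ_sub_of_half_lt (by simpa using hn)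
  | succ n ih =>
    push_cast at hn
    have hone := ih (ν + 1) (by linarith)
    have htwo := ih (ν + 2) (by linarith)
    have hinv : Tendsto (fun x : ℝ => x⁻¹) atTop (𝓝 0) := tendsto_inv_atTop_zero
    have hcos : Tendsto (fun x => x⁻¹ * cos (x - (ν + 1) * π / 2 - π / 4)) atTop (𝓝 0) :=
      hinv.zero_mul_isBoundedUnder_le (isBoundedUnder_of ⟨1, fun x => abs_cos_le_one _⟩)
    have hcombination := (((hinv.mul hone).add (hcos.const_mul √(2 / π))).const_mul
      (2 * (ν + 1))).sub htwo
    simp only [mul_zero, add_zero, sub_zero] at hcombination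
    refine hcombination.congr' ((eventually_gt_atTop 0).mono fun x hx => ?_)
    rw [besselJ_add_two hx, show x - (ν + 2) * π / 2 - π / 4 = x - ν * π / 2 - π / 4 - π by ring,
      cos_sub_pi]
    ring

end Asymptotics

section Zeros

variable {ν : ℝ}

lemma hasDerivAt_sqrt_mul_besselJ {x : ℝ} (hx : 0 < x) :
    HasDerivAt (fun y => √y * besselJ ν y)
      ((ν + 1 / 2) / x * (√x * besselJ ν x) - √x * besselJ (ν + 1) x) x := by
  refine ((hasDerivAt_sqrt hx.ne').mul (hasDerivAt_besselJ hx)).congr_deriv ?_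
  field_simp
  rw [sq_sqrt hx.le]
  ring

lemma hasDerivAt_sqrt_mul_besselJ_add_one {x : ℝ} (hx : 0 < x) :
    HasDerivAt (fun y => √y * besselJ (ν + 1) y)
      (√x * besselJ ν x - (ν + 1 / 2) / x * (√x * besselJ (ν + 1) x)) x := by
  refine (hasDerivAt_sqrt_mul_besselJ hx).congr_deriv ?_
  rw [add_assoc ν 1 1, one_add_one_eq_two, besselJ_add_two hx]
  field_simp
  ring

/-- Sturm comparison with `sin` for `√x * J_ν x`, which solves `u'' = -(1 - (ν² - 1/4) / x²) u`. -/
lemma exists_besselJ_eq_zero_mem_Ioc {a : ℝ} (hν : |ν| ≤ 1 / 2) (ha : 0 < a) :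
    ∃ z ∈ Ioc a (a + π), besselJ ν z = 0 := by
  have hderiv {x : ℝ} (hx : 0 < x) : HasDerivAt
      (fun x => (ν + 1 / 2) / x * (√x * besselJ ν x) - √x * besselJ (ν + 1) x)
      (-((1 - (ν ^ 2 - 1 / 4) / x ^ 2) * (√x * besselJ ν x))) x := by
    refine ((((hasDerivAt_id x).fun_inv hx.ne').const_mul (ν + 1 / 2)).mul
      (hasDerivAt_sqrt_mul_besselJ hx) |>.sub
        (hasDerivAt_sqrt_mul_besselJ_add_one hx)).congr_deriv ?_
    simp only [id]
    field_simp
    ring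
  have hpotential (x : ℝ) : 1 ^ 2 ≤ 1 - (ν ^ 2 - 1 / 4) / x ^ 2 := by
    have hν_sq : ν ^ 2 ≤ (1 / 2) ^ 2 := sq_le_sq' (abs_le.1 hν).1 (abs_le.1 hν).2
    have : (ν ^ 2 - 1 / 4) / x ^ 2 ≤ 0 :=
      div_nonpos_of_nonpos_of_nonneg (by linarith) (by positivity)
    linarith
  obtain ⟨z, hz, hzero⟩ := exists_eq_zero_mem_Ioc_of_sq_le one_pos
    (fun x hx => hasDerivAt_sqrt_mul_besselJ (ha.trans_le hx.1))
    (fun x hx => hderiv (ha.trans_le hx.1)) fun x _ => hpotential x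
  rw [div_one] at hz
  exact ⟨z, hz, (mul_eq_zero.1 hzero).resolve_left (sqrt_pos.2 (ha.trans hz.1)).ne'⟩

lemma tendsto_zero_of_tendsto_sin {ι : Type*} {l : Filter ι} {y : ι → ℝ} {c : ℝ} (hc : c < π)
    (hy : ∀ᶠ i in l, |y i| ≤ c) (hsin : Tendsto (fun i => sin (y i)) l (𝓝 0)) :
    Tendsto y l (𝓝 0) := by
  rcases l.eq_or_neBot with rfl | _
  · exact tendsto_bot
  have hc₀ : 0 ≤ c := by
    obtain ⟨i, hi⟩ := hy.exists
    exact (abs_nonneg _).trans hi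
  have hcos : 0 < cos (c / 2) := cos_pos_of_mem_Ioo ⟨by linarith [pi_pos], by linarith⟩
  have hbound : Tendsto (fun i => π / (2 * cos (c / 2)) * |sin (y i)|) l (𝓝 0) := by
    simpa using hsin.abs.const_mul (π / (2 * cos (c / 2)))
  refine squeeze_zero_norm' (hy.mono fun i hi => ?_) hbound
  have hhalf : |y i / 2| ≤ c / 2 := by
    rw [abs_div, abs_two]
    linarith
  have hcos_le : cos (c / 2) ≤ cos (y i / 2) := by
    rw [← cos_abs (y i / 2)]
    exact cos_le_cos_of_nonneg_of_le_pi (abs_nonneg _) (by linarith) hhalf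
  have hjordan := mul_abs_le_abs_sin (hhalf.trans (by linarith))
  have hdouble : |sin (y i)| = 2 * |sin (y i / 2)| * cos (y i / 2) := by
    rw [← abs_of_pos (hcos.trans_le hcos_le), ← abs_two, ← abs_mul, ← abs_mul, abs_two,
      ← sin_two_mul, mul_div_cancel₀ _ two_ne_zero]
  rw [abs_div, abs_two] at hjordan
  calc ‖y i‖ = π * (2 / π * (|y i| / 2)) := by rw [norm_eq_abs]; field_simp
    _ ≤ π * |sin (y i / 2)| := by gcongr
    _ = π / (2 * cos (c / 2)) * (2 * |sin (y i / 2)| * cos (c / 2)) := by field_simp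
    _ ≤ π / (2 * cos (c / 2)) * |sin (y i)| := by rw [hdouble]; gcongr

lemma tendsto_sub_of_besselJ_eq_zero {z : ℕ → ℝ} {c : ℝ} (hc : c < π)
    (hzero : ∀ n, besselJ ν (z n) = 0)
    (hz : ∀ᶠ n : ℕ in atTop, |z n - ((n + 1) * π + (ν - 1 / 2) * π / 2)| ≤ c) :
    Tendsto (fun n => z n - (n + 1) * π) atTop (𝓝 ((ν - 1 / 2) * π / 2)) := by
  have hz_atTop : Tendsto z atTop atTop := by
    refine tendsto_atTop_mono' atTop (f₁ := fun n : ℕ => n * π + (π + (ν - 1 / 2) * π / 2 - c)) ?_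
      (tendsto_atTop_add_const_right _ _ (tendsto_natCast_atTop_atTop.atTop_mul_const pi_pos))
    filter_upwards [hz] with n hn
    linarith [(abs_le.1 hn).1]
  have hcos : Tendsto (fun n => |cos (z n - ν * π / 2 - π / 4)|) atTop (𝓝 0) := by
    have h := ((tendsto_sqrt_mul_besselJ_sub ν).comp hz_atTop).abs.const_mul (√(2 / π))⁻¹
    rw [abs_zero, mul_zero] at h
    refine h.congr fun n => ?_
    rw [Function.comp_apply, hzero, mul_zero, zero_sub, abs_neg, abs_mul,
      abs_of_nonneg (sqrt_nonneg _), inv_mul_cancel_left₀ (sqrt_pos.2 (by positivity)).ne']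
  rw [← tendsto_sub_nhds_zero_iff]
  refine (tendsto_zero_of_tendsto_sin hc hz ?_).congr fun n => by ring
  refine tendsto_zero_iff_abs_tendsto_zero _ |>.2 (hcos.congr fun n => ?_)
  rw [Function.comp_apply, show z n - ν * π / 2 - π / 4 =
    z n - ((n + 1) * π + (ν - 1 / 2) * π / 2) + (n + 1 : ℕ) * π - π / 2 by push_cast; ring,
    cos_sub_pi_div_two, sin_add_nat_mul_pi]
  simp [abs_mul]

/-- `z` is an increasing sequence of positive zeros of `J_ν` obeying McMahon's asymptotics
`z n = (n + 1) π + (ν - 1 / 2) π / 2 + o(1)`. It is not required to list all the zeros. -/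
structure IsMcMahonSequence (ν : ℝ) (z : ℕ → ℝ) : Prop where
  strictMono : StrictMono z
  pos (n : ℕ) : 0 < z n
  besselJ_eq_zero (n : ℕ) : besselJ ν (z n) = 0
  tendsto_sub : Tendsto (fun n => z n - (n + 1) * π) atTop (𝓝 ((ν - 1 / 2) * π / 2))

lemma exists_isMcMahonSequence_of_le_half (hν : -(1 / 2) < ν) (hν' : ν ≤ 1 / 2) :
    ∃ z, IsMcMahonSequence ν z := by
  have ha : 0 < (ν + 1 / 2) * π / 2 := by
    have : 0 < ν + 1 / 2 := by linarith
    positivity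
  choose z hz hzero using fun n : ℕ => exists_besselJ_eq_zero_mem_Ioc
    (a := (ν + 1 / 2) * π / 2 + n * π) (abs_le.2 ⟨hν.le, hν'⟩) (by positivity)
  refine ⟨z, strictMono_nat_of_lt_succ fun n => (hz n).2.trans_lt ?_,
    fun n => (by positivity : 0 < _ + n * π).trans (hz n).1, hzero,
    tendsto_sub_of_besselJ_eq_zero (c := π / 2) (by linarith [pi_pos]) hzero
      (.of_forall fun n => abs_le.2 ?_)⟩
  · convert (hz (n + 1)).1 using 1
    push_cast
    ring
  · constructor <;> linarith [(hz n).1, (hz n).2]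

lemma IsMcMahonSequence.exists_add_one {z : ℕ → ℝ} (hz : IsMcMahonSequence ν z) :
    ∃ w, IsMcMahonSequence (ν + 1) w := by
  choose w hw hzero using fun n => exists_besselJ_add_one_eq_zero_mem_Ioo (hz.pos n)
    (hz.strictMono n.lt_succ_self) (hz.besselJ_eq_zero n) (hz.besselJ_eq_zero (n + 1))
  refine ⟨w, strictMono_nat_of_lt_succ fun n => (hw n).2.trans (hw (n + 1)).1,
    fun n => (hz.pos n).trans (hw n).1, hzero,
    tendsto_sub_of_besselJ_eq_zero (c := 3 * π / 4) (by linarith [pi_pos]) hzero ?_⟩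
  have hlower := hz.tendsto_sub.eventually_const_le (sub_lt_self _ (by positivity : 0 < π / 4))
  have hupper := (hz.tendsto_sub.comp (tendsto_add_atTop_nat 1)).eventually_le_const
    (lt_add_of_pos_right _ (by positivity : 0 < π / 4))
  filter_upwards [hlower, hupper] with n hn hn'
  simp only [Function.comp_apply, Nat.cast_add, Nat.cast_one] at hn'
  exact abs_le.2 ⟨by linarith [(hw n).1], by linarith [(hw n).2]⟩

/-- Upward induction on the order, from Sturm's zeros for `|ν| ≤ 1 / 2`, by Rolle's theorem. -/
theorem exists_isMcMahonSequence (hν : -(1 / 2) < ν) : ∃ z, IsMcMahonSequence ν z := by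
  obtain ⟨n, hn⟩ := exists_nat_ge (ν - 1 / 2)
  induction n generalizing ν with
  | zero => exact exists_isMcMahonSequence_of_le_half hν (by simpa using hn)
  | succ n ih =>
    push_cast at hn
    rcases le_or_gt ν (1 / 2) with h | h
    · exact exists_isMcMahonSequence_of_le_half hν h
    · obtain ⟨z, hz⟩ := ih (ν := ν - 1) (by linarith) (by linarith)
      simpa using hz.exists_add_one

lemma IsKthBesselZero.le_of_strictMono {n : ℕ} {j : ℝ} {z : ℕ → ℝ}
    (hj : IsKthBesselZero ν (n + 1) j) (hz : StrictMono z) (hpos : ∀ m, 0 < z m)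
    (hzero : ∀ m, besselJ ν (z m) = 0) : j ≤ z n := by
  by_contra! hlt
  have hsubset : z '' Iic n ⊆ {t | t ∈ Ioo 0 j ∧ besselJ ν t = 0} := by
    rintro _ ⟨m, hm, rfl⟩
    exact ⟨⟨hpos m, (hz.monotone hm).trans_lt hlt⟩, hzero m⟩
  have hcard := encard_le_encard hsubset
  rw [hz.injective.encard_image, hj.2.2, ← Finset.coe_Iic, encard_coe_eq_coe_finsetCard] at hcard
  norm_cast at hcard
  rw [Nat.card_Iic] at hcard
  exact n.not_succ_le_self hcard

end Zeros

/-- The relation says `ν / sin φ * cos φ - ν * (π / 2 - φ) = X`; now expand `cos φ ≤ 1` and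
`π / 2 - φ` to second order. -/
lemma add_mul_pi_div_two_sub_le_div_sin {ν X φ : ℝ} (hν : 0 < ν) (hX : 0 < X)
    (hφ : φ ∈ Ioc 0 (π / 2)) (hrel : sin φ / (cos φ - (π / 2 - φ) * sin φ) = ν / X) :
    X + ν * π / 2 - π * ν ^ 2 / (2 * X) ≤ ν / sin φ := by
  have hsin : 0 < sin φ := sin_pos_of_pos_of_lt_pi hφ.1 (by linarith [hφ.2, pi_pos])
  have hden : 0 < cos φ - (π / 2 - φ) * sin φ :=
    (div_pos_iff_of_pos_left hsin).1 (hrel ▸ div_pos hν hX)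
  have hX_eq : X = ν / sin φ * cos φ - ν * (π / 2 - φ) := by
    rw [div_eq_div_iff hden.ne' hX.ne'] at hrel
    field_simp
    linarith
  have hcos : ν / sin φ * cos φ ≤ ν / sin φ := mul_le_of_le_one_right (by positivity) (cos_le_one φ)
  have hjordan : φ ≤ π / 2 * sin φ := by
    have := mul_le_sin hφ.1.le hφ.2
    rw [div_mul_eq_mul_div, div_le_iff₀ pi_pos] at this
    linarith
  have hsin_le : sin φ ≤ ν / X := by
    rw [← hrel]
    refine le_div_self hsin.le hden ((sub_le_self _ ?_).trans (cos_le_one φ))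
    exact mul_nonneg (sub_nonneg.2 hφ.2) hsin.le
  have hφ_le : ν * φ ≤ π * ν ^ 2 / (2 * X) := calc
    ν * φ ≤ ν * (π / 2 * (ν / X)) := by gcongr; exact hjordan.trans (by gcongr)
    _ = π * ν ^ 2 / (2 * X) := by field_simp
  linarith

theorem stmt_11 (ν ε : ℝ) (hν : 0 < ν) (hε : 0 < ε) :
    ∃ k₀ : ℕ, ∀ k : ℕ, k₀ ≤ k → ∀ φ : ℝ, φ ∈ Set.Ioc 0 (Real.pi / 2) →
      0 < Real.cos φ - (Real.pi / 2 - φ) * Real.sin φ →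
      Real.sin φ / (Real.cos φ - (Real.pi / 2 - φ) * Real.sin φ) = ν / (k * Real.pi) →
      ∀ j : ℝ, IsKthBesselZero ν k j →
        j < ν / Real.sin φ - (1 - ε) * Real.pi / 4 := by
  obtain ⟨z, hz⟩ := exists_isMcMahonSequence (by linarith : -(1 / 2) < ν)
  have hcorrection : Tendsto (fun n : ℕ => π * ν ^ 2 / (2 * ((n + 1) * π))) atTop (𝓝 0) :=
    tendsto_const_nhds.div_atTop <| ((tendsto_atTop_add_const_right _ _
      tendsto_natCast_atTop_atTop).atTop_mul_const pi_pos).const_mul_atTop two_pos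
  have hmargin : (ν - 1 / 2) * π / 2 + 0 < (ν - 1 / 2) * π / 2 + ε * π / 4 := by
    gcongr
    positivity
  obtain ⟨n₀, hn₀⟩ := eventually_atTop.1
    ((hz.tendsto_sub.add hcorrection).eventually_lt_const hmargin)
  refine ⟨n₀ + 1, fun k hk φ hφ _ hrel j hj => ?_⟩
  obtain ⟨n, rfl⟩ := Nat.exists_eq_add_of_le' (le_of_add_le_right hk)
  have hjz : j ≤ z n := hj.le_of_strictMono hz.strictMono hz.pos hz.besselJ_eq_zero
  have hzn := hn₀ n (Nat.le_of_add_le_add_right hk)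
  push_cast at hrel
  have hφ_expansion := add_mul_pi_div_two_sub_le_div_sin hν (by positivity) hφ hrel
  linarith
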